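/- Fix D, K ∈ ℕ. Let p be a degree-K homogeneous polynomial in n variables whose coefficients are i.i.d. standard Gaussians. Then with probability at least 1 − n^{−Ω(DK)}, the squared norm of the coefficient vector of p^D satisfies ‖p^D‖² = Θ(n^{DK}). -/

import Mathlib

open MeasureTheory ProbabilityTheory MvPolynomial

/-- The degree-`K` homogeneous polynomial in `n` variables with coefficient
vector `a` indexed by degree-`K` monomials (multisets of size `K`). -/
noncomputable def polyOfCoeffs (n K : ℕ) (a : Sym (Fin n) K → ℝ) :
    MvPolynomial (Fin n) ℝ :=
  ∑ s : Sym (Fin n) K, monomial (Multiset.toFinsupp (Sym.toMultiset s)) (a s)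

/-- The squared Euclidean norm of the coefficient vector of a polynomial. -/
noncomputable def coeffNormSq (n : ℕ) (p : MvPolynomial (Fin n) ℝ) : ℝ :=
  ∑ m ∈ p.support, p.coeff m ^ 2

/-! Since `p ↦ ‖p‖²` is the mean of `|p|²` over the torus (Parseval), Jensen's inequality gives
`(‖p‖²)^D ≤ ‖p^D‖²`. Conversely, a monomial of degree `d` factors in at most `2 ^ d` ways, so
Cauchy-Schwarz bounds `‖p * q‖²` by a constant times `‖p‖² ‖q‖²`, and hence `‖p^D‖²` by a constant
times `(‖p‖²)^D`. It remains to control `‖p‖²`, a sum of `Θ(n^K)` i.i.d. variables, by Chebyshev's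
inequality. -/

lemma card_antidiagonal_le_two_pow {σ : Type*} [DecidableEq σ] (m : σ →₀ ℕ) :
    (Finset.HasAntidiagonal.antidiagonal m).card ≤ 2 ^ m.degree := by
  classical
  calc (Finset.HasAntidiagonal.antidiagonal m).card
      = ((Multiset.antidiagonal (Finsupp.toMultiset m)).map
          (Prod.map Multiset.toFinsupp Multiset.toFinsupp)).toFinset.card := by
        rw [← Multiset.toFinsupp_support]
        rfl
    _ ≤ _ := Multiset.toFinset_card_le _
    _ = 2 ^ m.degree := by
        rw [Multiset.card_map, Multiset.card_antidiagonal, Finsupp.card_toMultiset]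
        rfl

lemma coeffNormSq_nonneg {n : ℕ} (p : MvPolynomial (Fin n) ℝ) : 0 ≤ coeffNormSq n p :=
  Finset.sum_nonneg fun _ _ => sq_nonneg _

lemma coeff_mul_eq_sum_support {R σ : Type*} [CommSemiring R] [DecidableEq σ]
    (p q : MvPolynomial σ R) (m : σ →₀ ℕ) :
    (p * q).coeff m
      = ∑ x ∈ p.support ×ˢ q.support with x.1 + x.2 = m, p.coeff x.1 * q.coeff x.2 := by
  rw [coeff_mul]
  refine (Finset.sum_subset (fun x hx => by simp_all) fun x hx hx' => ?_).symm
  rw [Finset.HasAntidiagonal.mem_antidiagonal] at hx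
  simp only [Finset.mem_filter, Finset.mem_product] at hx'
  grind

lemma card_filter_add_eq_le {σ : Type*} [DecidableEq σ]
    (s : Finset ((σ →₀ ℕ) × (σ →₀ ℕ))) (m : σ →₀ ℕ) :
    (s.filter fun x => x.1 + x.2 = m).card ≤ 2 ^ m.degree :=
  (Finset.card_le_card fun x hx => by simpa using (Finset.mem_filter.1 hx).2).trans
    (card_antidiagonal_le_two_pow m)

lemma coeff_mul_sq_le {σ : Type*} [DecidableEq σ] (p q : MvPolynomial σ ℝ) (m : σ →₀ ℕ) :
    (p * q).coeff m ^ 2 ≤ 2 ^ m.degree *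
      ∑ x ∈ p.support ×ˢ q.support with x.1 + x.2 = m, p.coeff x.1 ^ 2 * q.coeff x.2 ^ 2 := by
  rw [coeff_mul_eq_sum_support]
  simp only [← mul_pow]
  refine sq_sum_le_card_mul_sum_sq.trans (mul_le_mul_of_nonneg_right ?_ (by positivity))
  exact_mod_cast card_filter_add_eq_le _ m

lemma coeffNormSq_mul_le {n : ℕ} (p q : MvPolynomial (Fin n) ℝ) :
    coeffNormSq n (p * q)
      ≤ 2 ^ (p.totalDegree + q.totalDegree) * (coeffNormSq n p * coeffNormSq n q) := by
  set d := p.totalDegree + q.totalDegree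
  have degree_le {m} (hm : m ∈ (p * q).support) : m.degree ≤ d :=
    (le_totalDegree hm).trans (totalDegree_mul p q)
  calc coeffNormSq n (p * q)
      ≤ ∑ m ∈ (p * q).support, 2 ^ d *
          ∑ x ∈ p.support ×ˢ q.support with x.1 + x.2 = m, p.coeff x.1 ^ 2 * q.coeff x.2 ^ 2 :=
        Finset.sum_le_sum fun m hm => (coeff_mul_sq_le p q m).trans <| by
          gcongr
          · exact one_le_two
          · exact degree_le hm
    _ ≤ 2 ^ d * ∑ x ∈ p.support ×ˢ q.support, p.coeff x.1 ^ 2 * q.coeff x.2 ^ 2 := by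
        rw [← Finset.mul_sum]
        gcongr
        exact Finset.sum_fiberwise_le_sum_of_sum_fiber_nonneg fun _ _ => by positivity
    _ = 2 ^ d * (coeffNormSq n p * coeffNormSq n q) := by
        rw [Finset.sum_product, coeffNormSq, coeffNormSq, Finset.sum_mul_sum]

lemma coeffNormSq_pow_le {n : ℕ} (p : MvPolynomial (Fin n) ℝ) (D : ℕ) :
    coeffNormSq n (p ^ D) ≤ 2 ^ (p.totalDegree * D ^ 2) * coeffNormSq n p ^ D := by
  induction D with
  | zero => simp [coeffNormSq]
  | succ D ih =>
    have degree_le : (p ^ D).totalDegree + p.totalDegree ≤ p.totalDegree * (D + 1) := by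
      grind [totalDegree_pow p D]
    have norm_p := coeffNormSq_nonneg p
    have norm_pow := coeffNormSq_nonneg (p ^ D)
    calc coeffNormSq n (p ^ (D + 1))
        ≤ 2 ^ ((p ^ D).totalDegree + p.totalDegree) *
            (coeffNormSq n (p ^ D) * coeffNormSq n p) := by
          rw [pow_succ]
          exact coeffNormSq_mul_le _ _
      _ ≤ 2 ^ (p.totalDegree * (D + 1)) *
            (2 ^ (p.totalDegree * D ^ 2) * coeffNormSq n p ^ D * coeffNormSq n p) := by
          gcongr
          exact one_le_two
      _ = 2 ^ (p.totalDegree * (D + 1 + D ^ 2)) * coeffNormSq n p ^ (D + 1) := by ring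
      _ ≤ 2 ^ (p.totalDegree * (D + 1) ^ 2) * coeffNormSq n p ^ (D + 1) := by
          gcongr
          · exact one_le_two
          · nlinarith

lemma coeff_polyOfCoeffs {n K : ℕ} (a : Sym (Fin n) K → ℝ) (s : Sym (Fin n) K) :
    (polyOfCoeffs n K a).coeff (Multiset.toFinsupp (s : Multiset (Fin n))) = a s := by
  simp [polyOfCoeffs, coeff_sum, coeff_monomial, Sym.coe_injective.eq_iff]

lemma support_polyOfCoeffs_subset {n K : ℕ} (a : Sym (Fin n) K → ℝ) :
    (polyOfCoeffs n K a).support ⊆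
      Finset.univ.image fun s : Sym (Fin n) K => Multiset.toFinsupp (s : Multiset (Fin n)) := by
  refine support_sum.trans (Finset.biUnion_subset.2 fun s _ => support_monomial_subset.trans ?_)
  simp

lemma coeffNormSq_polyOfCoeffs {n K : ℕ} (a : Sym (Fin n) K → ℝ) :
    coeffNormSq n (polyOfCoeffs n K a) = ∑ s, a s ^ 2 := by
  rw [coeffNormSq, Finset.sum_subset (support_polyOfCoeffs_subset a) fun m _ hm => by
      rw [notMem_support_iff.1 hm, zero_pow two_ne_zero],
    Finset.sum_image fun s _ t _ h => Sym.coe_injective (Multiset.toFinsupp.injective h)]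
  simp only [coeff_polyOfCoeffs]

lemma totalDegree_polyOfCoeffs_le {n K : ℕ} (a : Sym (Fin n) K → ℝ) :
    (polyOfCoeffs n K a).totalDegree ≤ K :=
  totalDegree_finsetSum_le fun s _ => (totalDegree_monomial_le _ _).trans_eq <|
    (Multiset.toFinsupp_sum_eq _).trans s.2

section Torus

-- Makes `volume` on `UnitAddTorus` the Haar probability measure.
attribute [local instance] instMeasureSpaceUnitAddCircle
  instIsProbabilityMeasureUnitAddCircleVolume

variable {σ : Type*} [Fintype σ]

open Classical in
/-- The trigonometric polynomial obtained from a polynomial by the substitution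
`X j = exp (2 * π * I * t j)`; its Fourier coefficients are the coefficients of the polynomial. -/
noncomputable def torusEval : MvPolynomial σ ℝ →ₐ[ℝ] C(UnitAddTorus σ, ℂ) :=
  aeval fun i => UnitAddTorus.mFourier (Pi.single i 1)

lemma torusEval_eq_sum (p : MvPolynomial σ ℝ) :
    torusEval p
      = ∑ m ∈ p.support, ((p.coeff m : ℝ) : ℂ) • UnitAddTorus.mFourier (fun i => (m i : ℤ)) := by
  classical
  ext t
  have prod_eval (m : σ →₀ ℕ) :
      ∏ i, UnitAddTorus.mFourier (Pi.single i 1) t ^ m i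
        = UnitAddTorus.mFourier (fun i => (m i : ℤ)) t := by
    simp only [UnitAddTorus.mFourier_single, fourier_one]
    simp [UnitAddTorus.mFourier, AddCircle.toCircle_nsmul]
  simp [torusEval, aeval_def, eval₂_eq', prod_eval]

lemma integral_norm_torusEval_sq (p : MvPolynomial σ ℝ) :
    ∫ t, ‖torusEval p t‖ ^ 2 = ∑ m ∈ p.support, p.coeff m ^ 2 := by
  have orthonormal_monomials :
      Orthonormal ℂ fun m : σ →₀ ℕ => UnitAddTorus.mFourierLp 2 (fun i => (m i : ℤ)) := by
    refine UnitAddTorus.orthonormal_mFourier.comp (fun (m : σ →₀ ℕ) i => (m i : ℤ))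
      fun m m' h => ?_
    ext i
    exact Nat.cast_injective (congrFun h i)
  have parseval := orthonormal_monomials.inner_sum
    (fun m => ((p.coeff m : ℝ) : ℂ)) (fun m => ((p.coeff m : ℝ) : ℂ)) p.support
  simp only [UnitAddTorus.mFourierLp, ← map_smul, ← map_sum, ← torusEval_eq_sum,
    ContinuousMap.inner_toLp, Complex.mul_conj', Complex.conj_mul', Complex.norm_real,
    Real.norm_eq_abs, ← Complex.ofReal_pow, sq_abs, integral_complex_ofReal,
    ← Complex.ofReal_sum] at parseval
  exact Complex.ofReal_injective parseval

lemma pow_coeffNormSq_le_coeffNormSq_pow {n : ℕ} (p : MvPolynomial (Fin n) ℝ) (D : ℕ) :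
    coeffNormSq n p ^ D ≤ coeffNormSq n (p ^ D) := by
  have integrable_pow (k : ℕ) : Integrable fun t => (‖torusEval p t‖ ^ 2) ^ k :=
    Continuous.integrable_of_hasCompactSupport (by fun_prop) (.of_compactSpace _)
  calc coeffNormSq n p ^ D = (∫ t, ‖torusEval p t‖ ^ 2) ^ D := by
        rw [integral_norm_torusEval_sq, coeffNormSq]
    _ ≤ ∫ t, (‖torusEval p t‖ ^ 2) ^ D :=
        (convexOn_pow D).map_integral_le (by fun_prop) isClosed_Ici
          (.of_forall fun t => sq_nonneg ‖torusEval p t‖)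
          (by simpa only [pow_one] using integrable_pow 1) (integrable_pow D)
    _ = ∫ t, ‖torusEval (p ^ D) t‖ ^ 2 := by
        simp only [map_pow, ContinuousMap.pow_apply, norm_pow, pow_right_comm]
    _ = coeffNormSq n (p ^ D) := integral_norm_torusEval_sq _

end Torus

lemma card_sym_le_pow (α : Type*) [Fintype α] [DecidableEq α] (k : ℕ) :
    Fintype.card (Sym α k) ≤ Fintype.card α ^ k := by
  have ofVector_surjective : Function.Surjective (Sym.ofVector : List.Vector α k → Sym α k) := by
    rintro ⟨⟨l⟩, hl⟩
    exact ⟨⟨l, hl⟩, rfl⟩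
  simpa only [card_vector] using Fintype.card_le_of_surjective _ ofVector_surjective

lemma pow_le_factorial_mul_card_sym (α : Type*) [Fintype α] [DecidableEq α] (k : ℕ) :
    Fintype.card α ^ k ≤ k.factorial * Fintype.card (Sym α k) := by
  rw [Sym.card_sym_eq_choose, ← Nat.ascFactorial_eq_factorial_mul_choose']
  exact Nat.pow_succ_le_ascFactorial _ k

lemma measure_pi_le_abs_sum_sub_integral_le {ι Ω : Type*} [Fintype ι] [MeasurableSpace Ω]
    {ν : Measure Ω} [IsProbabilityMeasure ν] {X : Ω → ℝ} (hX : MemLp X 2 ν) {t : ℝ} (ht : 0 < t) :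
    Measure.pi (fun _ : ι => ν) {a | t ≤ |∑ i, X (a i) - Fintype.card ι * ∫ x, X x ∂ν|}
      ≤ ENNReal.ofReal (Fintype.card ι * Var[X; ν] / t ^ 2) := by
  have memLp_eval (i : ι) : MemLp (fun a : ι → Ω => X (a i)) 2 (Measure.pi fun _ => ν) :=
    hX.comp_measurePreserving (measurePreserving_eval (fun _ : ι => ν) i)
  have integral_eval (i : ι) : ∫ a : ι → Ω, X (a i) ∂Measure.pi (fun _ => ν) = ∫ x, X x ∂ν :=
    integral_comp_eval (μ := fun _ => ν) hX.aestronglyMeasurable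
  have integral_sum : ∫ a : ι → Ω, ∑ i, X (a i) ∂Measure.pi (fun _ => ν)
      = Fintype.card ι * ∫ x, X x ∂ν := by
    rw [integral_finsetSum _ fun i _ => (memLp_eval i).integrable one_le_two]
    simp only [integral_eval, Finset.sum_const, Finset.card_univ, nsmul_eq_mul]
  have variance_sum : Var[∑ i, fun a : ι → Ω => X (a i); Measure.pi fun _ => ν]
      = Fintype.card ι * Var[X; ν] := by
    rw [variance_sum_pi fun _ => hX, Finset.sum_const, Finset.card_univ, nsmul_eq_mul]
  have chebyshev :=
    meas_ge_le_variance_div_sq (memLp_finsetSum' Finset.univ fun i _ => memLp_eval i) ht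
  rw [variance_sum] at chebyshev
  simpa only [Finset.sum_apply, integral_sum] using chebyshev

lemma ofReal_one_sub_le_measure {Ω : Type*} [MeasurableSpace Ω] {μ : Measure Ω}
    [IsProbabilityMeasure μ] {s : Set Ω} {ε : ℝ} (hε : 0 ≤ ε) (hs : μ sᶜ ≤ ENNReal.ofReal ε) :
    ENNReal.ofReal (1 - ε) ≤ μ s := by
  rw [ENNReal.ofReal_sub _ hε, ENNReal.ofReal_one, tsub_le_iff_right]
  calc 1 = μ Set.univ := measure_univ.symm
    _ ≤ μ s + μ sᶜ := measure_univ_le_add_compl s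
    _ ≤ μ s + ENNReal.ofReal ε := by gcongr

lemma eventually_div_pow_le_rpow_neg_half (B : ℝ) {K : ℕ} (hK : 0 < K) :
    ∀ᶠ x : ℝ in Filter.atTop, B / x ^ K ≤ x ^ (-(K / 2 : ℝ)) := by
  have tendsto_zero :
      Filter.Tendsto (fun x : ℝ => B * x ^ (-(K / 2 : ℝ))) Filter.atTop (nhds 0) := by
    simpa only [mul_zero] using (tendsto_rpow_neg_atTop (by positivity)).const_mul B
  filter_upwards [tendsto_zero.eventually_le_const one_pos, Filter.eventually_gt_atTop 0]
    with x hx x_pos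
  calc B / x ^ K = B * x ^ (-(K / 2 : ℝ)) * x ^ (-(K / 2 : ℝ)) := by
        rw [mul_assoc, ← Real.rpow_add x_pos, ← neg_add, add_halves, Real.rpow_neg x_pos.le,
          Real.rpow_natCast, div_eq_mul_inv]
    _ ≤ 1 * x ^ (-(K / 2 : ℝ)) := by gcongr
    _ = x ^ (-(K / 2 : ℝ)) := one_mul _

/-- The coefficient vectors whose squared norm is within a factor of two of its mean, when the
second moment of a single coefficient is `m`. -/
def nearMeanNormSq (n K : ℕ) (m : ℝ) : Set (Sym (Fin n) K → ℝ) :=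
  {a | |∑ s, a s ^ 2 - Fintype.card (Sym (Fin n) K) * m| < Fintype.card (Sym (Fin n) K) * m / 2}

lemma sum_sq_bounds_of_mem_nearMeanNormSq {n K : ℕ} {m : ℝ} (hm : 0 ≤ m)
    {a : Sym (Fin n) K → ℝ} (ha : a ∈ nearMeanNormSq n K m) :
    m / (2 * K.factorial) * n ^ K ≤ ∑ s, a s ^ 2 ∧ ∑ s, a s ^ 2 ≤ 2 * m * n ^ K := by
  have card_le : (Fintype.card (Sym (Fin n) K) : ℝ) ≤ n ^ K := by
    exact_mod_cast (card_sym_le_pow (Fin n) K).trans_eq (by rw [Fintype.card_fin])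
  have le_card : (n : ℝ) ^ K / K.factorial ≤ Fintype.card (Sym (Fin n) K) := by
    rw [div_le_iff₀' (by positivity)]
    exact_mod_cast (Fintype.card_fin n ▸ pow_le_factorial_mul_card_sym (Fin n) K)
  rw [nearMeanNormSq, Set.mem_ofPred_eq, abs_lt] at ha
  obtain ⟨lower, upper⟩ := ha
  constructor
  · calc m / (2 * K.factorial) * n ^ K = n ^ K / K.factorial * m / 2 := by ring
      _ ≤ Fintype.card (Sym (Fin n) K) * m / 2 := by gcongr
      _ ≤ ∑ s, a s ^ 2 := by linarith
  · calc ∑ s, a s ^ 2 ≤ 2 * m * Fintype.card (Sym (Fin n) K) := by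
          nlinarith [mul_nonneg hm (Nat.cast_nonneg (α := ℝ) (Fintype.card (Sym (Fin n) K)))]
      _ ≤ 2 * m * n ^ K := by gcongr

lemma coeffNormSq_polyOfCoeffs_pow_bounds {n K : ℕ} {m : ℝ} (hm : 0 ≤ m) (D : ℕ)
    {a : Sym (Fin n) K → ℝ} (ha : a ∈ nearMeanNormSq n K m) :
    (m / (2 * K.factorial)) ^ D * (n : ℝ) ^ (D * K) ≤ coeffNormSq n (polyOfCoeffs n K a ^ D) ∧
      coeffNormSq n (polyOfCoeffs n K a ^ D)
        ≤ 2 ^ (K * D ^ 2) * (2 * m) ^ D * (n : ℝ) ^ (D * K) := by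
  obtain ⟨lower, upper⟩ := sum_sq_bounds_of_mem_nearMeanNormSq hm ha
  rw [← coeffNormSq_polyOfCoeffs] at lower upper
  constructor
  · calc (m / (2 * K.factorial)) ^ D * (n : ℝ) ^ (D * K)
        = (m / (2 * K.factorial) * n ^ K) ^ D := by rw [mul_pow, ← pow_mul, mul_comm K D]
      _ ≤ coeffNormSq n (polyOfCoeffs n K a) ^ D := by gcongr
      _ ≤ coeffNormSq n (polyOfCoeffs n K a ^ D) := pow_coeffNormSq_le_coeffNormSq_pow ..
  · have norm_nonneg := coeffNormSq_nonneg (polyOfCoeffs n K a)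
    calc coeffNormSq n (polyOfCoeffs n K a ^ D)
        ≤ 2 ^ ((polyOfCoeffs n K a).totalDegree * D ^ 2) * coeffNormSq n (polyOfCoeffs n K a) ^ D :=
          coeffNormSq_pow_le _ D
      _ ≤ 2 ^ (K * D ^ 2) * (2 * m * n ^ K) ^ D := by
          gcongr
          · exact one_le_two
          · exact totalDegree_polyOfCoeffs_le a
      _ = 2 ^ (K * D ^ 2) * (2 * m) ^ D * (n : ℝ) ^ (D * K) := by
          rw [mul_pow (2 * m), ← pow_mul, mul_comm K D, mul_assoc]

lemma measure_compl_nearMeanNormSq_le {ν : Measure ℝ} [IsProbabilityMeasure ν]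
    (hν : MemLp (fun x => x ^ 2) 2 ν) (hm : 0 < ∫ x, x ^ 2 ∂ν) {n : ℕ} (hn : 0 < n) (K : ℕ) :
    Measure.pi (fun _ => ν) (nearMeanNormSq n K (∫ x, x ^ 2 ∂ν))ᶜ
      ≤ ENNReal.ofReal
          (4 * K.factorial * Var[fun x => x ^ 2; ν] / (∫ x, x ^ 2 ∂ν) ^ 2 / n ^ K) := by
  have le_card : (n : ℝ) ^ K ≤ K.factorial * Fintype.card (Sym (Fin n) K) := by
    exact_mod_cast (Fintype.card_fin n ▸ pow_le_factorial_mul_card_sym (Fin n) K)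
  have card_pos : (0 : ℝ) < Fintype.card (Sym (Fin n) K) :=
    pos_of_mul_pos_right ((by positivity : (0 : ℝ) < n ^ K).trans_le le_card) (by positivity)
  have variance_nonneg := variance_nonneg (fun x : ℝ => x ^ 2) ν
  simp only [nearMeanNormSq, Set.compl_ofPred, not_lt]
  refine (measure_pi_le_abs_sum_sub_integral_le hν (by positivity)).trans
    (ENNReal.ofReal_le_ofReal ?_)
  rw [div_div, div_le_div_iff₀ (by positivity) (by positivity)]
  set V := Var[fun x : ℝ => x ^ 2; ν]
  set m := ∫ x, x ^ 2 ∂ν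
  set N := (Fintype.card (Sym (Fin n) K) : ℝ)
  calc N * V * (m ^ 2 * n ^ K) ≤ N * V * (m ^ 2 * (K.factorial * N)) := by gcongr
    _ = 4 * K.factorial * V * (N * m / 2) ^ 2 := by ring

lemma memLp_sq_of_memLp_four {Ω : Type*} [MeasurableSpace Ω] {ν : Measure Ω} {f : Ω → ℝ}
    (hf : MemLp f 4 ν) : MemLp (fun x => f x ^ 2) 2 ν := by
  have four_div_two : (4 : ENNReal) / 2 = 2 :=
    ((ENNReal.eq_div_iff two_ne_zero ENNReal.ofNat_ne_top).2 (by norm_num)).symm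
  simpa [four_div_two] using hf.norm_rpow_div 2

lemma integral_sq_gaussianReal (v : NNReal) : ∫ x, x ^ 2 ∂gaussianReal 0 v = v := by
  rw [← variance_of_integral_eq_zero aemeasurable_id' (by simp)]
  exact variance_fun_id_gaussianReal

theorem norm_of_polynomial_powers_general (ν : Measure ℝ) [IsProbabilityMeasure ν]
    (fourth_moment : MemLp id 4 ν) (second_moment_pos : 0 < ∫ x, x ^ 2 ∂ν)
    (D K : ℕ) (hD : 0 < D) (hK : 0 < K) :
    ∃ c C c' : ℝ, 0 < c ∧ 0 < C ∧ 0 < c' ∧ ∃ N₀ : ℕ, ∀ n : ℕ, N₀ ≤ n →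
      (Measure.pi fun _ : Sym (Fin n) K => ν)
        {a | c * (n : ℝ) ^ (D * K) ≤ coeffNormSq n (polyOfCoeffs n K a ^ D) ∧
             coeffNormSq n (polyOfCoeffs n K a ^ D) ≤ C * (n : ℝ) ^ (D * K)}
        ≥ ENNReal.ofReal (1 - (n : ℝ) ^ (-(c' * ((D * K : ℕ) : ℝ)))) := by
  set m := ∫ x, x ^ 2 ∂ν
  refine ⟨(m / (2 * K.factorial)) ^ D, 2 ^ (K * D ^ 2) * (2 * m) ^ D, 1 / (2 * D),
    by positivity, by positivity, by positivity, ?_⟩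
  have exponent : 1 / (2 * (D : ℝ)) * (D * K : ℕ) = K / 2 := by push_cast; field_simp
  obtain ⟨N₀, hN₀⟩ := Filter.eventually_atTop.1 <| (Filter.eventually_gt_atTop 0).and <|
    tendsto_natCast_atTop_atTop.eventually <| eventually_div_pow_le_rpow_neg_half
      (4 * K.factorial * Var[fun x => x ^ 2; ν] / m ^ 2) hK
  refine ⟨N₀, fun n hn => ?_⟩
  obtain ⟨n_pos, tail_le⟩ := hN₀ n hn
  rw [exponent]
  refine ofReal_one_sub_le_measure (by positivity) ?_
  calc _ ≤ Measure.pi (fun _ => ν) (nearMeanNormSq n K m)ᶜ :=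
        measure_mono <| Set.compl_subset_compl.2 fun a =>
          coeffNormSq_polyOfCoeffs_pow_bounds second_moment_pos.le D
    _ ≤ _ := measure_compl_nearMeanNormSq_le (memLp_sq_of_memLp_four fourth_moment)
        second_moment_pos n_pos K
    _ ≤ ENNReal.ofReal (n ^ (-(K / 2 : ℝ))) := ENNReal.ofReal_le_ofReal tail_le

/-- Norm of powers of a random polynomial: for fixed `D, K ≥ 1`, if the
coefficients of a degree-`K` homogeneous polynomial `p` in `n` variables are
i.i.d. standard Gaussians, then with probability at least `1 − n^{−Ω(DK)}` one
has `‖p^D‖² = Θ(n^{DK})`. -/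
theorem norm_of_polynomial_powers (D K : ℕ) (hD : 0 < D) (hK : 0 < K) :
    ∃ c C c' : ℝ, 0 < c ∧ 0 < C ∧ 0 < c' ∧ ∃ N₀ : ℕ, ∀ n : ℕ, N₀ ≤ n →
      (Measure.pi fun _ : Sym (Fin n) K => gaussianReal 0 1)
        {a | c * (n : ℝ) ^ (D * K) ≤ coeffNormSq n (polyOfCoeffs n K a ^ D) ∧
             coeffNormSq n (polyOfCoeffs n K a ^ D) ≤ C * (n : ℝ) ^ (D * K)}
        ≥ ENNReal.ofReal (1 - (n : ℝ) ^ (-(c' * ((D * K : ℕ) : ℝ)))) :=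
  norm_of_polynomial_powers_general _ (memLp_id_gaussianReal 4)
    (by rw [integral_sq_gaussianReal]; exact one_pos) D K hD hK
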